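/- Assume char k = 0 and that I is m-primary. Then ⌊(n−1)(d−1)/2⌋ ≤ μ₀(I) ≤ (n−1)(d−1); equivalently (since μ₀(I) = (n−1)(d−1) − indeg(H_1) + d in the m-primary case), d ≤ indeg(H_1) ≤ d + ⌈(n−1)(d−1)/2⌉. -/

import Mathlib

/-!
The lower bound is immediate, since a syzygy of coefficient degree `e` sits in degree `e + d ≥ d`.

For the upper bound it suffices to find a non-Koszul syzygy of coefficient degree
`e = ⌈(n - 1)(d - 1) / 2⌉`. As `k` is infinite and `I` is `m`-primary, `n` elements `g` of the span of
the `f i` form a regular sequence (`exists_regularSeq`). This uses that `m` is not associated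
to an ideal generated by a regular sequence of length `< n` (`socleFree_of_regularSeq`), proved by
exchanging elements of the sequence and comparing with the sequence of the variables. Let
`J = (g)`. The Hilbert series of the complete intersection `R / J` is `(1 + t + ⋯ + t ^ (d - 1)) ^ n`
(`hilb_completeIntersection`); its coefficients are symmetric about `n (d - 1) / 2` and strictly
increase up to the middle, so they drop from degree `e` to degree `e + d` (`boxCoeff_drop`).
Multiplication by any form of degree `d` hence has a kernel in degree `e` of `R / J`
(`exists_kernel`). Taking for this form an `f t` outside the span of `g`, a kernel element is
the `f t`-coefficient of a syzygy of `f`, and it is nonzero modulo `J`, whereas for Koszul syzygies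
this coefficient lies in `J` (`exists_syzygy`).
-/

open MvPolynomial

noncomputable section

/-- The irrelevant maximal ideal `m = (X₁, …, X_n)`. -/
def mIdeal (k : Type*) [Field k] (n : ℕ) : Ideal (MvPolynomial (Fin n) k) :=
  Ideal.span (Set.range (X : Fin n → MvPolynomial (Fin n) k))

/-- The (first) Koszul boundaries `B₁ ⊆ R^{n+1}`. -/
def koszulB1 {k : Type*} [Field k] {n : ℕ}
    (f : Fin (n+1) → MvPolynomial (Fin n) k) :
    Submodule (MvPolynomial (Fin n) k) (Fin (n+1) → MvPolynomial (Fin n) k) :=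
  Submodule.span (MvPolynomial (Fin n) k)
    {v | ∃ i j : Fin (n+1), i < j ∧ v = Pi.single j (f i) - Pi.single i (f j)}

/-- `(H₁)_ν ≠ 0`. -/
def H1Nonzero {k : Type*} [Field k] {n : ℕ}
    (f : Fin (n+1) → MvPolynomial (Fin n) k) (d ν : ℕ) : Prop :=
  ∃ a : Fin (n+1) → MvPolynomial (Fin n) k, ∃ e : ℕ, ν = e + d ∧
    (∀ i, (a i).IsHomogeneous e) ∧ (∑ i, a i * f i) = 0 ∧ a ∉ koszulB1 f

/-- The initial degree of a graded object whose set of degrees with nonzero component is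
`s`, as an extended natural number (`⊤` when the object is zero). -/
def indegE (s : Set ℕ) : ℕ∞ := sInf ((↑) '' s)

/-! ### Regular sequences and depth -/

/-- `x` is a nonzerodivisor on `R / K`. -/
def RegularOn {R : Type*} [CommRing R] (x : R) (K : Ideal R) : Prop :=
  ∀ z, x * z ∈ K → z ∈ K

/-- The quotient `R / K` has no nonzero element annihilated by `m`. For maximal `m` this says that
`m` is not an associated prime of `R / K`. -/
def SocleFree {R : Type*} [CommRing R] (m K : Ideal R) : Prop :=
  ∀ z, (∀ v ∈ m, v * z ∈ K) → z ∈ K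

/-- The ideal `K + (h 0, …, h (j - 1))`. -/
def idealAdd {R : Type*} [CommRing R] (K : Ideal R) (h : ℕ → R) : ℕ → Ideal R
  | 0 => K
  | j + 1 => idealAdd K h j ⊔ Ideal.span {h j}

/-- `h 0, …, h (i - 1)` is a weakly regular sequence on `R / K`. -/
def RegularSeq {R : Type*} [CommRing R] (K : Ideal R) (h : ℕ → R) (i : ℕ) : Prop :=
  ∀ j < i, RegularOn (h j) (idealAdd K h j)

section Depth

variable {R : Type*} [CommRing R]

lemma mem_sup_span_iff {K : Ideal R} {h z : R} :
    z ∈ K ⊔ Ideal.span {h} ↔ ∃ a ∈ K, ∃ w, z = a + h * w := by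
  constructor
  · intro hz
    obtain ⟨a, ha, b, hb, rfl⟩ := Submodule.mem_sup.1 hz
    obtain ⟨w, rfl⟩ := Ideal.mem_span_singleton'.1 hb
    exact ⟨a, ha, w, by ring⟩
  · rintro ⟨a, ha, w, rfl⟩
    exact Submodule.add_mem_sup ha (Ideal.mul_mem_right _ _ (Ideal.mem_span_singleton_self h))

lemma RegularOn.socleFree {m K : Ideal R} {x : R} (hx : RegularOn x K) (hm : x ∈ m) :
    SocleFree m K := fun z hz => hx z (hz x hm)

lemma idealAdd_sup (K : Ideal R) (l : R) (h : ℕ → R) (j : ℕ) :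
    idealAdd (K ⊔ Ideal.span {l}) h j = idealAdd K h j ⊔ Ideal.span {l} := by
  induction j with
  | zero => rfl
  | succ j ih => simp only [idealAdd, ih]; exact sup_right_comm _ _ _

lemma idealAdd_congr (K : Ideal R) {h h' : ℕ → R} {j : ℕ} (H : ∀ i < j, h i = h' i) :
    idealAdd K h j = idealAdd K h' j := by
  induction j with
  | zero => rfl
  | succ j ih =>
    simp only [idealAdd]
    rw [ih fun i hi => H i (by omega), H j (by omega)]

/-- If `h, l` is a regular sequence on `R / L`, then `h` is still a nonzerodivisor
modulo `L + (l)`. -/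
lemma RegularOn.sup_span {L : Ideal R} {h l : R} (h1 : RegularOn h L)
    (h3 : RegularOn l (L ⊔ Ideal.span {h})) : RegularOn h (L ⊔ Ideal.span {l}) := by
  intro z hz
  obtain ⟨a, ha, w, hw⟩ := mem_sup_span_iff.1 hz
  have hw' : w ∈ L ⊔ Ideal.span {h} := by
    apply h3
    refine mem_sup_span_iff.2 ⟨-a, L.neg_mem ha, z, ?_⟩
    rw [hw]; ring
  obtain ⟨b, hb, u, rfl⟩ := mem_sup_span_iff.1 hw'
  have : z - l * u ∈ L := by
    apply h1
    have : h * (z - l * u) = a + l * b := by rw [mul_sub, hw]; ring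
    rw [this]
    exact L.add_mem ha (L.mul_mem_left _ hb)
  exact mem_sup_span_iff.2 ⟨_, this, u, by ring⟩

/-- Exchange of nonzerodivisors `h` and `l` on `R / L`: an element `z` killed by `m` modulo
`L + (h)` yields the element `w = l z / h`, killed by `m` modulo `L + (l)`. -/
lemma SocleFree.swap {m L : Ideal R} {h l : R} (h1 : RegularOn h L) (h2 : RegularOn l L)
    (hl : l ∈ m) (H : SocleFree m (L ⊔ Ideal.span {l})) :
    SocleFree m (L ⊔ Ideal.span {h}) := by
  intro z hz
  obtain ⟨a, ha, w, hw⟩ := mem_sup_span_iff.1 (hz l hl)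
  have hw' : w ∈ L ⊔ Ideal.span {l} := by
    apply H
    intro r hr
    obtain ⟨a', ha', u, hu⟩ := mem_sup_span_iff.1 (hz r hr)
    have : r * w - l * u ∈ L := by
      apply h1
      have : h * (r * w - l * u) = l * a' - r * a := by
        linear_combination l * hu - r * hw
      rw [this]
      exact L.sub_mem (L.mul_mem_left _ ha') (L.mul_mem_left _ ha)
    exact mem_sup_span_iff.2 ⟨_, this, u, by ring⟩
  obtain ⟨b, hb, c, rfl⟩ := mem_sup_span_iff.1 hw'
  have : z - h * c ∈ L := by
    apply h2
    have : l * (z - h * c) = a + h * b := by rw [mul_sub, hw]; ring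
    rw [this]
    exact L.add_mem ha (L.mul_mem_left _ hb)
  exact mem_sup_span_iff.2 ⟨_, this, c, by ring⟩

lemma SocleFree.pow {m K : Ideal R} (H : SocleFree m K) (N : ℕ) : SocleFree (m ^ N) K := by
  induction N with
  | zero => intro z hz; simpa using hz 1 (by simp)
  | succ N ih =>
    intro z hz
    refine ih z fun v hv => H _ fun w hw => ?_
    rw [← mul_assoc]
    apply hz
    rw [pow_succ']
    exact Ideal.mul_mem_mul hw hv

variable {k : Type*} [Field k] [Infinite k] [Algebra k R] [IsNoetherianRing R]

/-- Prime avoidance for linear combinations: if the ideal generated by the `k`-subspace `V` contains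
a power of `m`, and `m` is associated to none of the finitely many `R / K`, then some element of `V`
is a nonzerodivisor on all the `R / K`. -/
lemma exists_regularOn {m : Ideal R} (V : Submodule k R) {N : ℕ}
    (hV : m ^ N ≤ Ideal.span (V : Set R)) {S : Set (Ideal R)} (hS : S.Finite)
    (H : ∀ K ∈ S, SocleFree m K) : ∃ v ∈ V, ∀ K ∈ S, RegularOn v K := by
  classical
  set T : Set (Ideal R) := ⋃ K ∈ S, associatedPrimes R (R ⧸ K) with hT
  have hTf : T.Finite := hS.biUnion fun K _ => associatedPrimes.finite R (R ⧸ K)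
  let F : Ideal R → Submodule k V := fun P => (P.restrictScalars k).comap V.subtype
  have hF : ⊤ ∉ hTf.toFinset.image F := by
    intro h
    obtain ⟨P, hP, hPtop⟩ := Finset.mem_image.1 h
    rw [Set.Finite.mem_toFinset, hT] at hP
    simp only [Set.mem_iUnion] at hP
    obtain ⟨K, hK, hP⟩ := hP
    obtain ⟨hPp, z, hz⟩ := isAssociatedPrime_iff.1 hP
    obtain ⟨z, rfl⟩ := Ideal.Quotient.mk_surjective z
    have hmem : ∀ v, v ∈ P ↔ v * z ∈ K := by
      intro v
      rw [hz, Submodule.mem_colon_singleton, Submodule.mem_bot, Algebra.smul_def,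
        Ideal.Quotient.algebraMap_eq, ← map_mul, Ideal.Quotient.eq_zero_iff_mem]
    have hVP : (V : Set R) ⊆ P := by
      intro v hv
      have : (⟨v, hv⟩ : V) ∈ F P := by rw [hPtop]; trivial
      exact this
    have hm : m ^ N ≤ P := hV.trans (Ideal.span_le.2 hVP)
    have hzK : z ∈ K := (H K hK).pow N z fun v hv => (hmem v).1 (hm hv)
    apply hPp.ne_top
    rw [Ideal.eq_top_iff_one, hmem, one_mul]
    exact hzK
  obtain ⟨v, hv⟩ := (Set.ne_univ_iff_exists_notMem _).1
    (Subspace.biUnion_ne_univ_of_top_notMem hF)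
  refine ⟨v, v.2, fun K hK z hz => ?_⟩
  by_contra hzK
  obtain ⟨P, hP, hle⟩ := exists_le_isAssociatedPrime_of_isNoetherianRing R
    (Ideal.Quotient.mk K z) (by rwa [Ne, Ideal.Quotient.eq_zero_iff_mem])
  apply hv
  simp only [Set.mem_iUnion]
  refine ⟨F P, Finset.mem_image_of_mem F ((Set.Finite.mem_toFinset _).2 ?_), ?_⟩
  · exact Set.mem_biUnion hK hP
  · apply hle
    rw [Submodule.mem_colon_singleton, Submodule.mem_bot, Algebra.smul_def,
      Ideal.Quotient.algebraMap_eq, ← map_mul, Ideal.Quotient.eq_zero_iff_mem]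
    exact hz

/-- Invariance of depth: if `R / K` carries a regular sequence of length `n` in `m`, then every
regular sequence `h` in `m` of smaller length `i` can be prolonged, because `m` is not associated to
`R / (K + (h 0, …, h (i - 1)))`. -/
lemma socleFree_of_regularSeq {m : Ideal R} (V : Submodule k R) {N : ℕ}
    (hV : m ^ N ≤ Ideal.span (V : Set R)) (hVm : ∀ v ∈ V, v ∈ m) (x h : ℕ → R) (n : ℕ) :
    ∀ (K : Ideal R) (i : ℕ), (∀ j < n, x j ∈ m) → (∀ j < i, h j ∈ m) →
      RegularSeq K x n → RegularSeq K h i → i < n → SocleFree m (idealAdd K h i) := by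
  induction n with
  | zero => intro K i _ _ _ _ hi; omega
  | succ n ihn =>
    intro K i
    induction i using Nat.strong_induction_on with
    | _ i ihi =>
    intro hx hh hxr hhr hin
    rcases i with _ | i
    · exact (hxr 0 (by omega)).socleFree (hx 0 (by omega))
    have hS1 : ∀ j ≤ i, SocleFree m (idealAdd K h j) := fun j hj =>
      ihi j (by omega) hx (fun a ha => hh a (by omega)) hxr (fun a ha => hhr a (by omega)) (by omega)
    have hS2 : ∀ j ≤ n, SocleFree m (idealAdd K x j) := fun j hj =>
      (hxr j (by omega)).socleFree (hx j (by omega))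
    -- One element `l` that is regular modulo all initial segments of both sequences.
    obtain ⟨l, hlV, hl⟩ := exists_regularOn V hV
      (S := (idealAdd K h '' Set.Iic i) ∪ (idealAdd K x '' Set.Iic n))
      (((Set.finite_Iic i).image _).union ((Set.finite_Iic n).image _)) (by
        rintro L (⟨j, hj, rfl⟩ | ⟨j, hj, rfl⟩)
        · exact hS1 j hj
        · exact hS2 j hj)
    have hl1 : ∀ j ≤ i, RegularOn l (idealAdd K h j) := fun j hj =>
      hl _ (Or.inl ⟨j, hj, rfl⟩)
    have hl2 : ∀ j ≤ n, RegularOn l (idealAdd K x j) := fun j hj =>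
      hl _ (Or.inr ⟨j, hj, rfl⟩)
    have key : SocleFree m (idealAdd (K ⊔ Ideal.span {l}) h i) := by
      refine ihn _ i (fun j hj => hx j (by omega)) (fun j hj => hh j (by omega)) ?_ ?_ (by omega)
      · intro j hj
        rw [idealAdd_sup]
        exact (hxr j (by omega)).sup_span (hl2 (j + 1) (by omega))
      · intro j hj
        rw [idealAdd_sup]
        exact (hhr j (by omega)).sup_span (hl1 (j + 1) (by omega))
    rw [idealAdd_sup] at key
    exact SocleFree.swap (hhr i (by omega)) (hl1 i le_rfl) (hVm l hlV) key

/-- In the presence of one regular sequence of length `n` in `m`, a subspace `V` generating an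
`m`-primary ideal contains a regular sequence of length `n`. -/
lemma exists_regularSeq {m : Ideal R} (V : Submodule k R) {N : ℕ}
    (hV : m ^ N ≤ Ideal.span (V : Set R)) (hVm : ∀ v ∈ V, v ∈ m) (K : Ideal R) (x : ℕ → R) (n : ℕ)
    (hx : ∀ j < n, x j ∈ m) (hxr : RegularSeq K x n) :
    ∃ g : ℕ → R, (∀ j, g j ∈ V) ∧ RegularSeq K g n := by
  suffices ∀ i ≤ n, ∃ g : ℕ → R, (∀ j, g j ∈ V) ∧ RegularSeq K g i from this n le_rfl
  intro i
  induction i with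
  | zero => exact fun _ => ⟨fun _ => 0, fun _ => V.zero_mem, fun j hj => by omega⟩
  | succ i ih =>
    intro hi
    obtain ⟨g, hg, hgr⟩ := ih (by omega)
    have hs := socleFree_of_regularSeq V hV hVm x g n K i hx (fun j _ => hVm _ (hg j)) hxr hgr
      (by omega)
    obtain ⟨v, hv, hvr⟩ := exists_regularOn V hV (Set.finite_singleton (idealAdd K g i))
      (by rintro _ rfl; exact hs)
    refine ⟨Function.update g i v, fun j => ?_, fun j hj => ?_⟩
    · by_cases hji : j = i
      · subst hji; simpa using hv
      · simpa [hji] using hg j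
    · rw [idealAdd_congr K (h' := g) fun a ha =>
        Function.update_of_ne (by omega : a ≠ i) v g]
      by_cases hji : j = i
      · subst hji; simpa using hvr _ rfl
      · rw [Function.update_of_ne hji]; exact hgr j (by omega)

end Depth

/-! ### Coefficients of `(1 + t + ⋯ + t ^ (d - 1)) ^ n` -/

/-- The backward difference of step `d`. -/
def bdiff (d : ℕ) (φ : ℤ → ℤ) : ℤ → ℤ := fun e => φ e - φ (e - d)

/-- `boxCoeff d n e` is the coefficient of `t ^ e` in `(1 + t + ⋯ + t ^ (d - 1)) ^ n`
(zero for negative `e`). -/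
def boxCoeff (d : ℕ) : ℕ → ℤ → ℤ
  | 0 => fun e => if e = 0 then 1 else 0
  | n + 1 => fun e => ∑ j ∈ Finset.range d, boxCoeff d n (e - j)

section Combinatorics

lemma bdiff_comm (a b : ℕ) : Function.Commute (bdiff a) (bdiff b) := by
  intro φ
  funext e
  simp only [bdiff]
  rw [sub_right_comm e (a : ℤ) b]
  ring

lemma bdiff_iterate_neg (d n : ℕ) {φ : ℤ → ℤ} (h : ∀ e < 0, φ e = 0) :
    ∀ e < 0, (bdiff d)^[n] φ e = 0 := by
  induction n with
  | zero => exact h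
  | succ n ih =>
    intro e he
    rw [Function.iterate_succ_apply', bdiff, ih _ he, ih _ (by omega), sub_zero]

lemma bdiff_one_injective {φ ψ : ℤ → ℤ} (hφ : ∀ e < 0, φ e = 0) (hψ : ∀ e < 0, ψ e = 0)
    (h : bdiff 1 φ = bdiff 1 ψ) : φ = ψ := by
  have key : ∀ m : ℕ, φ ((m : ℤ) - 1) = ψ ((m : ℤ) - 1) := by
    intro m
    induction m with
    | zero => rw [hφ _ (by simp), hψ _ (by simp)]
    | succ m ih =>
      have := congrFun h (m : ℤ)
      simp only [bdiff, Nat.cast_one] at this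
      push_cast
      rw [add_sub_cancel_right]
      linarith
  funext e
  rcases lt_or_ge e 0 with he | he
  · rw [hφ _ he, hψ _ he]
  · have := key (e + 1).toNat
    rwa [Int.toNat_of_nonneg (by omega), add_sub_cancel_right] at this

lemma bdiff_one_iterate_injective (n : ℕ) {φ ψ : ℤ → ℤ} (hφ : ∀ e < 0, φ e = 0)
    (hψ : ∀ e < 0, ψ e = 0) (h : (bdiff 1)^[n] φ = (bdiff 1)^[n] ψ) : φ = ψ := by
  induction n with
  | zero => exact h
  | succ n ih =>
    rw [Function.iterate_succ_apply', Function.iterate_succ_apply'] at h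
    exact ih (bdiff_one_injective (bdiff_iterate_neg 1 n hφ) (bdiff_iterate_neg 1 n hψ) h)

lemma boxCoeff_neg (d n : ℕ) : ∀ e < 0, boxCoeff d n e = 0 := by
  induction n with
  | zero => intro e he; exact if_neg he.ne
  | succ n ih => intro e he; exact Finset.sum_eq_zero fun j _ => ih _ (by omega)

lemma boxCoeff_sub (d n : ℕ) (e : ℤ) :
    boxCoeff d (n + 1) e - boxCoeff d (n + 1) (e - 1) = boxCoeff d n e - boxCoeff d n (e - d) := by
  have := Finset.sum_range_sub' (fun j : ℕ => boxCoeff d n (e - j)) d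
  simp only [Nat.cast_zero, sub_zero] at this
  rw [← this, Finset.sum_sub_distrib]
  simp only [boxCoeff]
  congr 1
  refine Finset.sum_congr rfl fun j _ => ?_
  congr 1
  push_cast
  ring

/-- The identity `(1 - t) ^ n (1 + ⋯ + t ^ (d - 1)) ^ n = (1 - t ^ d) ^ n`. -/
lemma bdiff_boxCoeff (d n : ℕ) :
    (bdiff 1)^[n] (boxCoeff d n) = (bdiff d)^[n] (boxCoeff d 0) := by
  induction n with
  | zero => rfl
  | succ n ih =>
    have h : bdiff 1 (boxCoeff d (n + 1)) = bdiff d (boxCoeff d n) := by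
      funext e
      exact_mod_cast boxCoeff_sub d n e
    rw [Function.iterate_succ_apply, h, ((bdiff_comm 1 d).iterate_left n).eq, ih,
      Function.iterate_succ_apply']

lemma boxCoeff_symm (d n : ℕ) (e : ℤ) :
    boxCoeff d n (n * ((d : ℤ) - 1) - e) = boxCoeff d n e := by
  induction n generalizing e with
  | zero => simp [boxCoeff]
  | succ n ih =>
    simp only [boxCoeff]
    rw [← Finset.sum_range_reflect]
    refine Finset.sum_congr rfl fun j hj => ?_
    have := Finset.mem_range.1 hj
    rw [← ih]
    congr 1
    rw [Nat.cast_sub (by omega), Nat.cast_sub (by omega)]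
    push_cast
    ring

/-- Unimodality: given symmetry, weak monotonicity on the lower half takes this form. -/
lemma boxCoeff_mono (d n : ℕ) (hd : 1 ≤ d) : ∀ a b : ℤ, a ≤ b → a + b ≤ n * ((d : ℤ) - 1) →
    boxCoeff d n a ≤ boxCoeff d n b := by
  induction n with
  | zero =>
    intro a b hab hs
    simp only [boxCoeff]
    push_cast at hs
    split_ifs <;> omega
  | succ n ih =>
    have hstep : ∀ e : ℤ, 2 * e + 1 ≤ ((n + 1 : ℕ) : ℤ) * ((d : ℤ) - 1) →
        boxCoeff d (n + 1) e ≤ boxCoeff d (n + 1) (e + 1) := by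
      intro e he
      have h1 := boxCoeff_sub d n (e + 1)
      have h2 := ih (e + 1 - d) (e + 1) (by omega) (by push_cast at he; linarith)
      rw [add_sub_cancel_right] at h1
      linarith
    intro a b hab hs
    obtain ⟨t, rfl⟩ : ∃ t : ℕ, b = a + t := ⟨(b - a).toNat, by omega⟩
    clear hab
    induction t generalizing a with
    | zero => simp
    | succ t iht =>
      rcases hs.eq_or_lt with h | h
      · rw [← boxCoeff_symm d (n + 1) a, ← h, add_sub_cancel_left]
      · have h1 := hstep a (by push_cast at h ⊢; linarith)
        have h2 := iht (a + 1) (by push_cast at h ⊢; linarith)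
        have h3 : a + 1 + (t : ℤ) = a + ((t + 1 : ℕ) : ℤ) := by push_cast; ring
        rw [h3] at h2
        exact h1.trans h2

/-- Strict growth on the lower half, as soon as there are two factors. The induction runs on the
first statement, which also holds for a single factor. -/
lemma boxCoeff_strict_aux (d : ℕ) (hd : 1 ≤ d) (n : ℕ) :
    (∀ e : ℤ, 0 ≤ e → 2 * e - d < (n + 1 : ℕ) * ((d : ℤ) - 1) →
      boxCoeff d (n + 1) (e - d) < boxCoeff d (n + 1) e) ∧
    (∀ e : ℤ, 0 ≤ e → 2 * e - 1 < (n + 2 : ℕ) * ((d : ℤ) - 1) →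
      boxCoeff d (n + 2) (e - 1) < boxCoeff d (n + 2) e) := by
  have himp : ∀ n : ℕ, (∀ e : ℤ, 0 ≤ e → 2 * e - d < (n + 1 : ℕ) * ((d : ℤ) - 1) →
      boxCoeff d (n + 1) (e - d) < boxCoeff d (n + 1) e) →
    (∀ e : ℤ, 0 ≤ e → 2 * e - 1 < (n + 2 : ℕ) * ((d : ℤ) - 1) →
      boxCoeff d (n + 2) (e - 1) < boxCoeff d (n + 2) e) := by
    intro n h e he hs
    have h1 := boxCoeff_sub d (n + 1) e
    have h2 := h e he (by push_cast at hs ⊢; linarith)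
    have h3 : boxCoeff d (n + 2) = boxCoeff d (n + 1 + 1) := rfl
    rw [h3]
    linarith
  induction n with
  | zero =>
    refine ⟨?_, himp 0 ?_⟩ <;>
    · intro e he hs
      push_cast at hs
      rw [boxCoeff_neg d _ (e - d) (by linarith)]
      simp only [boxCoeff]
      refine Finset.sum_pos' (fun j _ => by split_ifs <;> simp) ⟨e.toNat, ?_, ?_⟩
      · rw [Finset.mem_range]; omega
      · rw [if_pos (by omega)]; norm_num
  | succ n ih =>
    have hst := ih.2
    have hd' : (1 : ℤ) ≤ d := by exact_mod_cast hd
    have hnn : (0 : ℤ) ≤ (n : ℤ) * ((d : ℤ) - 1) := mul_nonneg (by positivity) (by linarith)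
    have h1 : ∀ e : ℤ, 0 ≤ e → 2 * e - d < (n + 1 + 1 : ℕ) * ((d : ℤ) - 1) →
        boxCoeff d (n + 1 + 1) (e - d) < boxCoeff d (n + 1 + 1) e := by
      intro e he hs
      rcases le_or_gt 0 (e - d + 1) with hc | hc
      · have h2 := hst (e - d + 1) hc (by push_cast at hs ⊢; linarith)
        rw [add_sub_cancel_right] at h2
        exact h2.trans_le
          (boxCoeff_mono d (n + 2) hd _ _ (by linarith) (by push_cast at hs ⊢; linarith))
      · have h2 := hst 0 le_rfl (by push_cast; nlinarith)
        rw [boxCoeff_neg d _ (0 - 1) (by norm_num)] at h2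
        rw [boxCoeff_neg d _ (e - d) (by omega)]
        exact h2.trans_le
          (boxCoeff_mono d (n + 2) hd _ _ he (by push_cast; nlinarith))
    exact ⟨h1, himp (n + 1) h1⟩

/-- The numerical heart of the upper bound. For `d ≥ 2` and `e = ⌈(n - 1)(d - 1) / 2⌉`, the
reflection of `e + d` in the centre of symmetry is `e - 1` or `e - 2`, so the coefficient drops from
`e` to `e + d`. For `d = 1` one has `e = 0` and the only nonzero coefficient is the one at `0`. -/
lemma boxCoeff_drop (n d : ℕ) (hn : 2 ≤ n) (hd : 1 ≤ d) :
    boxCoeff d n ((((n - 1) * (d - 1) + 1) / 2 : ℕ) + d) <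
      boxCoeff d n (((n - 1) * (d - 1) + 1) / 2 : ℕ) := by
  rcases hd.eq_or_lt with rfl | hd
  · have h : ∀ m, boxCoeff 1 m = boxCoeff 1 0 := by
      intro m
      induction m with
      | zero => rfl
      | succ m ih =>
        funext e
        change ∑ j ∈ Finset.range 1, boxCoeff 1 m (e - j) = _
        rw [ih, Finset.sum_range_one, Nat.cast_zero, sub_zero]
    rw [h]
    simp [boxCoeff]
  obtain ⟨n, rfl⟩ := Nat.exists_eq_add_of_le' hn
  obtain ⟨d, rfl⟩ := Nat.exists_eq_add_of_le' hd
  have e1 : (n + 2 - 1) * (d + 2 - 1) = (n + 1) * (d + 1) := rfl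
  rw [e1]
  set p := (n + 1) * (d + 1) with hp
  have hp1 : 1 ≤ p := by rw [hp]; nlinarith
  have hpS : ((n + 2 : ℕ) : ℤ) * (((d + 2 : ℕ) : ℤ) - 1) = p + (d + 1) := by
    rw [hp]; push_cast; ring
  set e := (p + 1) / 2 with he
  rw [← boxCoeff_symm (d + 2) (n + 2) ((e : ℤ) + _), hpS]
  have h2 := (boxCoeff_strict_aux (d + 2) (by omega) n).2
    ((p : ℤ) + (d + 1) - (e + (d + 2 : ℕ)) + 1) (by push_cast; omega) (by rw [hpS]; push_cast; omega)
  rw [add_sub_cancel_right] at h2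
  refine h2.trans_le (boxCoeff_mono _ _ (by omega) _ _ ?_ ?_)
  · push_cast; omega
  · rw [hpS]; push_cast; omega

end Combinatorics

/-! ### Hilbert functions of complete intersections -/

section Hilbert

variable {k : Type*} [Field k] {n : ℕ}

instance finiteDimensional_homogeneousSubmodule (e : ℕ) :
    FiniteDimensional k (homogeneousSubmodule (Fin n) k e) :=
  Module.Finite.iff_fg.2 (homogeneousSubmodule_fg (Fin n) k e)

/-- The degree-`e` part of an ideal. -/
def gradedPart (K : Ideal (MvPolynomial (Fin n) k)) (e : ℕ) :
    Submodule k (MvPolynomial (Fin n) k) :=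
  K.restrictScalars k ⊓ homogeneousSubmodule (Fin n) k e

lemma mem_gradedPart {K : Ideal (MvPolynomial (Fin n) k)} {e : ℕ} {p : MvPolynomial (Fin n) k} :
    p ∈ gradedPart K e ↔ p ∈ K ∧ p.IsHomogeneous e := Iff.rfl

lemma gradedPart_le (K : Ideal (MvPolynomial (Fin n) k)) (e : ℕ) :
    gradedPart K e ≤ homogeneousSubmodule (Fin n) k e := inf_le_right

instance finiteDimensional_gradedPart (K : Ideal (MvPolynomial (Fin n) k)) (e : ℕ) :
    FiniteDimensional k (gradedPart K e) :=
  Submodule.finiteDimensional_of_le (gradedPart_le K e)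

/-- The Hilbert function `e ↦ dim (R / K)_e` of a homogeneous ideal `K`, as a function on `ℤ`
vanishing on negative degrees. -/
def hilb (K : Ideal (MvPolynomial (Fin n) k)) (e : ℤ) : ℤ :=
  if e < 0 then 0 else
    (Module.finrank k (homogeneousSubmodule (Fin n) k e.toNat) : ℤ) -
      Module.finrank k (gradedPart K e.toNat)

lemma hilb_neg (K : Ideal (MvPolynomial (Fin n) k)) : ∀ e < 0, hilb K e = 0 :=
  fun _ he => if_pos he

lemma hilb_natCast (K : Ideal (MvPolynomial (Fin n) k)) (e : ℕ) :
    hilb K e = (Module.finrank k (homogeneousSubmodule (Fin n) k e) : ℤ) -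
      Module.finrank k (gradedPart K e) := by
  rw [hilb, if_neg (by omega), Int.toNat_natCast]

/-- An ideal stable under taking homogeneous components. -/
def HomIdeal (K : Ideal (MvPolynomial (Fin n) k)) : Prop :=
  ∀ p ∈ K, ∀ e, homogeneousComponent e p ∈ K

lemma homogeneousComponent_mul_add {g : MvPolynomial (Fin n) k} {d : ℕ} (hg : g.IsHomogeneous d)
    (r : MvPolynomial (Fin n) k) (e : ℕ) :
    homogeneousComponent (d + e) (g * r) = g * homogeneousComponent e r := by
  let _ := gradedAlgebra (σ := Fin n) (R := k)
  have := DirectSum.coe_decompose_mul_add_of_left_mem (homogeneousSubmodule (Fin n) k)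
    (i := d) (j := e) (a := g) (b := r) hg
  rwa [← decomposition.decompose'_apply, ← decomposition.decompose'_apply]

lemma homogeneousComponent_mul_of_lt {g : MvPolynomial (Fin n) k} {d : ℕ} (hg : g.IsHomogeneous d)
    (r : MvPolynomial (Fin n) k) {e : ℕ} (he : e < d) :
    homogeneousComponent e (g * r) = 0 := by
  let _ := gradedAlgebra (σ := Fin n) (R := k)
  have := DirectSum.coe_decompose_mul_of_left_mem_of_not_le (homogeneousSubmodule (Fin n) k)
    (i := d) (n := e) (a := g) (b := r) hg (by omega)
  rwa [← decomposition.decompose'_apply]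

lemma HomIdeal.sup_span {K : Ideal (MvPolynomial (Fin n) k)} (hK : HomIdeal K)
    {g : MvPolynomial (Fin n) k} {d : ℕ} (hg : g.IsHomogeneous d) :
    HomIdeal (K ⊔ Ideal.span {g}) := by
  intro p hp e
  obtain ⟨a, ha, w, rfl⟩ := mem_sup_span_iff.1 hp
  rw [map_add]
  refine Ideal.add_mem _ (Ideal.mem_sup_left (hK a ha e)) ?_
  rcases lt_or_ge e d with h | h
  · rw [homogeneousComponent_mul_of_lt hg w h]; exact Ideal.zero_mem _
  · obtain ⟨j, rfl⟩ := Nat.exists_eq_add_of_le h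
    rw [homogeneousComponent_mul_add hg]
    exact Ideal.mem_sup_right (Ideal.mul_mem_right _ _ (Ideal.mem_span_singleton_self g))

/-- Rank–nullity for `φ` corrected by a subspace `K` of the target. -/
lemma finrank_range_sup {A B : Type*} [AddCommGroup A] [Module k A] [AddCommGroup B] [Module k B]
    [FiniteDimensional k A] (φ : A →ₗ[k] B) (K : Submodule k B) [FiniteDimensional k K] :
    Module.finrank k (LinearMap.range φ ⊔ K : Submodule k B) + Module.finrank k (K.comap φ) =
      Module.finrank k A + Module.finrank k K := by
  have h := LinearMap.finrank_range_add_finrank_ker (φ.coprod K.subtype)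
  rw [LinearMap.range_coprod, Submodule.range_subtype, Module.finrank_prod] at h
  rw [← h]
  congr 1
  -- The kernel of `(a, b) ↦ φ a + b` is the graph of `-φ` over `φ⁻¹ K`.
  let π : LinearMap.ker (φ.coprod K.subtype) →ₗ[k] A :=
    (LinearMap.fst k A K).comp (Submodule.subtype _)
  have hπ : Function.Injective π := by
    rintro ⟨⟨a, b⟩, h1⟩ ⟨⟨a', b'⟩, h2⟩ (h3 : a = a')
    subst h3
    rw [LinearMap.mem_ker, LinearMap.coprod_apply] at h1 h2
    have : b = b' := Subtype.ext (add_left_cancel (h1.trans h2.symm))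
    subst this
    rfl
  have hr : LinearMap.range π = K.comap φ := by
    ext a
    constructor
    · rintro ⟨⟨⟨a', b⟩, h1⟩, rfl⟩
      rw [LinearMap.mem_ker, LinearMap.coprod_apply] at h1
      have h2 : φ a' = -(b : B) := eq_neg_of_add_eq_zero_left h1
      change φ a' ∈ K
      rw [h2]
      exact K.neg_mem b.2
    · intro (ha : φ a ∈ K)
      refine ⟨⟨⟨a, ⟨-φ a, K.neg_mem ha⟩⟩, ?_⟩, rfl⟩
      rw [LinearMap.mem_ker, LinearMap.coprod_apply]
      exact add_neg_cancel _
  rw [← hr, LinearMap.finrank_range_of_inj hπ]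

/-- Multiplication by `g` on forms of degree `e`. -/
def mulForm (g : MvPolynomial (Fin n) k) (e : ℕ) :
    homogeneousSubmodule (Fin n) k e →ₗ[k] MvPolynomial (Fin n) k :=
  (LinearMap.mulLeft k g).comp (Submodule.subtype _)

/-- Dimension count for multiplication by a form `g` that is injective on `(R / K)_e`. -/
lemma finrank_mulForm {K : Ideal (MvPolynomial (Fin n) k)} {g : MvPolynomial (Fin n) k} {d e : ℕ}
    (hg : g.IsHomogeneous d) (h : ∀ b, b.IsHomogeneous e → g * b ∈ K → b ∈ K) :
    Module.finrank k
        (LinearMap.range (mulForm g e) ⊔ gradedPart K (d + e) : Submodule k _) +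
      Module.finrank k (gradedPart K e) =
    Module.finrank k (homogeneousSubmodule (Fin n) k e) +
      Module.finrank k (gradedPart K (d + e)) := by
  rw [← finrank_range_sup (mulForm g e) (gradedPart K (d + e))]
  congr 1
  have : (gradedPart K (d + e)).comap (mulForm g e) =
      (gradedPart K e).comap (homogeneousSubmodule (Fin n) k e).subtype := by
    ext ⟨b, hb⟩
    change (g * b ∈ K ∧ (g * b).IsHomogeneous (d + e)) ↔ (b ∈ K ∧ b.IsHomogeneous e)
    exact ⟨fun hh => ⟨h b hb hh.1, hb⟩, fun hh => ⟨K.mul_mem_left _ hh.1, hg.mul hb⟩⟩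
  rw [this]
  exact (LinearEquiv.finrank_eq (Submodule.comapSubtypeEquivOfLe (gradedPart_le K e))).symm

lemma gradedPart_sup_span {K : Ideal (MvPolynomial (Fin n) k)} (hK : HomIdeal K)
    {g : MvPolynomial (Fin n) k} {d : ℕ} (hg : g.IsHomogeneous d) (e : ℕ) :
    gradedPart (K ⊔ Ideal.span {g}) (d + e) =
      LinearMap.range (mulForm g e) ⊔ gradedPart K (d + e) := by
  apply le_antisymm
  · rintro p ⟨hp, hph⟩
    obtain ⟨a, ha, w, rfl⟩ := mem_sup_span_iff.1 hp
    have h1 := homogeneousComponent_of_mem (m := d + e) hph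
    rw [if_pos rfl, map_add, homogeneousComponent_mul_add hg] at h1
    rw [← h1, add_comm (homogeneousComponent (d + e) a)]
    refine Submodule.add_mem_sup ⟨⟨_, homogeneousComponent_mem e w⟩, rfl⟩
      ⟨hK a ha _, homogeneousComponent_mem _ a⟩
  · refine sup_le ?_ fun p hp => ⟨Ideal.mem_sup_left hp.1, hp.2⟩
    rintro _ ⟨⟨b, hb⟩, rfl⟩
    exact ⟨Ideal.mem_sup_right (Ideal.mul_mem_right _ _ (Ideal.mem_span_singleton_self g)),
      hg.mul hb⟩

lemma gradedPart_sup_span_of_lt {K : Ideal (MvPolynomial (Fin n) k)} (hK : HomIdeal K)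
    {g : MvPolynomial (Fin n) k} {d : ℕ} (hg : g.IsHomogeneous d) {e : ℕ} (he : e < d) :
    gradedPart (K ⊔ Ideal.span {g}) e = gradedPart K e := by
  apply le_antisymm
  · rintro p ⟨hp, hph⟩
    refine ⟨?_, hph⟩
    obtain ⟨a, ha, w, rfl⟩ := mem_sup_span_iff.1 hp
    have h1 := homogeneousComponent_of_mem (m := e) hph
    rw [if_pos rfl, map_add, homogeneousComponent_mul_of_lt hg w he, add_zero] at h1
    rw [← h1]
    exact hK a ha e
  · exact fun p hp => ⟨Ideal.mem_sup_left hp.1, hp.2⟩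

/-- Dividing by a nonzerodivisor of degree `d` multiplies the Hilbert series by `1 - t ^ d`. -/
lemma hilb_sup_span {K : Ideal (MvPolynomial (Fin n) k)} (hK : HomIdeal K)
    {g : MvPolynomial (Fin n) k} {d : ℕ} (hg : g.IsHomogeneous d) (hr : RegularOn g K) :
    hilb (K ⊔ Ideal.span {g}) = bdiff d (hilb K) := by
  funext e
  rw [bdiff]
  rcases lt_or_ge e 0 with he | he
  · rw [hilb_neg _ e he, hilb_neg _ e he, hilb_neg _ (e - d) (by omega), sub_zero]
  lift e to ℕ using he
  rcases lt_or_ge e d with h | h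
  · rw [hilb_neg K ((e : ℤ) - d) (by omega), hilb_natCast, hilb_natCast,
      gradedPart_sup_span_of_lt hK hg h, sub_zero]
  · obtain ⟨j, rfl⟩ := Nat.exists_eq_add_of_le h
    have h1 : (((d + j : ℕ) : ℤ) - d) = (j : ℕ) := by push_cast; ring
    have h2 := finrank_mulForm (K := K) hg (e := j) fun b _ hb => hr b hb
    rw [h1, hilb_natCast, hilb_natCast, hilb_natCast, gradedPart_sup_span hK hg]
    omega

/-- If the Hilbert function of `R / K` drops from degree `e` to degree `e + d`, then multiplication
by a form of degree `d` has a kernel in degree `e`. -/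
lemma exists_kernel {K : Ideal (MvPolynomial (Fin n) k)} {g : MvPolynomial (Fin n) k} {d e : ℕ}
    (hg : g.IsHomogeneous d) (hlt : hilb K ((e : ℤ) + d) < hilb K e) :
    ∃ b, b.IsHomogeneous e ∧ b ∉ K ∧ g * b ∈ K := by
  by_contra! hcon
  have h := finrank_mulForm (K := K) hg (e := e) fun b hb hgb => by
    by_contra hbK
    exact hcon b hb hbK hgb
  have hle : (LinearMap.range (mulForm g e) ⊔ gradedPart K (d + e) : Submodule k _) ≤
      homogeneousSubmodule (Fin n) k (d + e) := by
    refine sup_le ?_ (gradedPart_le _ _)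
    rintro _ ⟨⟨b, hb⟩, rfl⟩
    exact hg.mul hb
  have h2 := Submodule.finrank_mono hle
  have h3 : (e : ℤ) + d = ((d + e : ℕ) : ℤ) := by push_cast; ring
  rw [h3, hilb_natCast, hilb_natCast] at hlt
  omega

lemma homIdeal_idealAdd {g : ℕ → MvPolynomial (Fin n) k} {d : ℕ} {i : ℕ}
    (hg : ∀ j < i, (g j).IsHomogeneous d) : HomIdeal (idealAdd ⊥ g i) := by
  induction i with
  | zero =>
    intro p hp e
    rw [idealAdd, Ideal.mem_bot] at hp
    rw [hp, map_zero]
    exact Ideal.zero_mem _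
  | succ i ih => exact HomIdeal.sup_span (ih fun j hj => hg j (by omega)) (hg i (by omega))

lemma hilb_idealAdd {g : ℕ → MvPolynomial (Fin n) k} {d : ℕ} {i : ℕ}
    (hg : ∀ j < i, (g j).IsHomogeneous d) (hr : RegularSeq ⊥ g i) :
    hilb (idealAdd ⊥ g i) = (bdiff d)^[i] (hilb (⊥ : Ideal (MvPolynomial (Fin n) k))) := by
  induction i with
  | zero => rfl
  | succ i ih =>
    rw [Function.iterate_succ_apply', ← ih (fun j hj => hg j (by omega)) fun j hj => hr j (by omega)]
    exact hilb_sup_span (homIdeal_idealAdd (d := d) fun j hj => hg j (by omega)) (hg i (by omega))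
      (hr i (by omega))

/-- The variables as a sequence indexed by `ℕ` (zero from index `n` on). -/
def varSeq (k : Type*) [Field k] (n : ℕ) (j : ℕ) : MvPolynomial (Fin n) k :=
  if h : j < n then X ⟨j, h⟩ else 0

lemma varSeq_of_lt {j : ℕ} (h : j < n) : varSeq k n j = X ⟨j, h⟩ := dif_pos h

lemma idealAdd_varSeq {j : ℕ} (hj : j ≤ n) :
    idealAdd ⊥ (varSeq k n) j = Ideal.span (X '' {i : Fin n | i.val < j}) := by
  induction j with
  | zero => simp [idealAdd]
  | succ j ih =>
    rw [idealAdd, ih (by omega), varSeq_of_lt (by omega), ← Ideal.span_union]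
    congr 1
    rw [← Set.image_singleton, ← Set.image_union]
    congr 1
    ext i
    simp only [Set.mem_union, Set.mem_ofPred_eq, Set.mem_singleton_iff, Fin.ext_iff]
    omega

lemma idealAdd_varSeq_self : idealAdd ⊥ (varSeq k n) n = mIdeal k n := by
  rw [idealAdd_varSeq le_rfl, mIdeal, ← Set.image_univ]
  congr 2
  ext i
  simp

lemma regularSeq_varSeq : RegularSeq ⊥ (varSeq k n) n := by
  intro j hj z hz
  rw [idealAdd_varSeq hj.le] at hz ⊢
  rw [varSeq_of_lt hj] at hz
  rw [mem_ideal_span_X_image] at hz ⊢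
  intro m hm
  obtain ⟨i, hi, hne⟩ := hz (Finsupp.single ⟨j, hj⟩ 1 + m) (by
    rw [mem_support_iff, coeff_X_mul]
    exact mem_support_iff.1 hm)
  refine ⟨i, hi, ?_⟩
  have hij : (⟨j, hj⟩ : Fin n) ≠ i := fun h => by
    subst h
    exact lt_irrefl j hi
  rwa [Finsupp.add_apply, Finsupp.single_eq_of_ne' hij, zero_add] at hne

lemma mem_mIdeal_of_isHomogeneous {p : MvPolynomial (Fin n) k} {e : ℕ} (he : e ≠ 0)
    (hp : p.IsHomogeneous e) : p ∈ mIdeal k n := by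
  rw [mIdeal, ← Set.image_univ, mem_ideal_span_X_image]
  intro m hm
  by_contra! hcon
  have : m = 0 := Finsupp.ext fun i => hcon i trivial
  subst this
  have := hp (mem_support_iff.1 hm)
  simp at this
  exact he this.symm

lemma hilb_mIdeal (d : ℕ) : hilb (mIdeal k n) = boxCoeff d 0 := by
  funext e
  rcases lt_or_ge e 0 with he | he
  · rw [hilb_neg _ e he, boxCoeff_neg d 0 e he]
  lift e to ℕ using he
  rw [hilb_natCast]
  rcases Nat.eq_zero_or_pos e with rfl | he
  · have h0 : gradedPart (mIdeal k n) 0 = ⊥ := by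
      rw [eq_bot_iff]
      rintro p ⟨hp, hp0⟩
      rw [homogeneousSubmodule_zero] at hp0
      obtain ⟨c, rfl⟩ := Submodule.mem_one.1 hp0
      have hp' : algebraMap k (MvPolynomial (Fin n) k) c ∈ mIdeal k n := hp
      rw [mIdeal, ← Set.image_univ, mem_ideal_span_X_image, algebraMap_eq] at hp'
      by_contra hne
      obtain ⟨i, -, hi⟩ := hp' 0 (by
        rw [mem_support_iff, coeff_zero_C]
        rintro rfl
        exact hne (by simp))
      exact hi rfl
    rw [h0, finrank_bot, homogeneousSubmodule_zero, Submodule.one_eq_span,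
      finrank_span_singleton one_ne_zero]
    simp [boxCoeff]
  · have h0 : gradedPart (mIdeal k n) e = homogeneousSubmodule (Fin n) k e :=
      le_antisymm (gradedPart_le _ _) fun p hp => ⟨mem_mIdeal_of_isHomogeneous he.ne' hp, hp⟩
    rw [h0, sub_self]
    exact (if_neg (by omega)).symm

/-- The Hilbert series of a complete intersection of `n` forms of degree `d` in `n` variables is
`(1 + t + ⋯ + t ^ (d - 1)) ^ n`. Comparing with the complete intersection of the `n` variables
avoids computing the Hilbert function of `R` itself. -/
lemma hilb_completeIntersection {g : ℕ → MvPolynomial (Fin n) k} {d : ℕ}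
    (hg : ∀ j < n, (g j).IsHomogeneous d) (hr : RegularSeq ⊥ g n) :
    hilb (idealAdd ⊥ g n) = boxCoeff d n := by
  have h1 : (bdiff 1)^[n] (hilb (⊥ : Ideal (MvPolynomial (Fin n) k))) = boxCoeff d 0 := by
    rw [← hilb_mIdeal (k := k) (n := n) d, ← idealAdd_varSeq_self, hilb_idealAdd _ regularSeq_varSeq]
    intro j hj
    rw [varSeq_of_lt hj]
    exact isHomogeneous_X k _
  refine bdiff_one_iterate_injective n (hilb_neg _) (boxCoeff_neg d n) ?_
  rw [hilb_idealAdd hg hr, bdiff_boxCoeff, ← h1]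
  exact ((bdiff_comm 1 d).iterate_iterate n n).eq _

lemma exists_sum_of_mem_idealAdd {g : ℕ → MvPolynomial (Fin n) k} {i : ℕ} :
    ∀ p ∈ idealAdd ⊥ g i, ∃ b : ℕ → MvPolynomial (Fin n) k, p = ∑ j ∈ Finset.range i, g j * b j := by
  induction i with
  | zero =>
    intro p hp
    rw [idealAdd, Ideal.mem_bot] at hp
    exact ⟨0, by simp [hp]⟩
  | succ i ih =>
    intro p hp
    obtain ⟨a, ha, w, rfl⟩ := mem_sup_span_iff.1 hp
    obtain ⟨b, rfl⟩ := ih a ha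
    refine ⟨Function.update b i w, ?_⟩
    rw [Finset.sum_range_succ, Function.update_self]
    congr 1
    refine Finset.sum_congr rfl fun j hj => ?_
    rw [Function.update_of_ne (Finset.mem_range.1 hj).ne]

lemma exists_homogeneous_sum {g : ℕ → MvPolynomial (Fin n) k} {d e i : ℕ}
    (hg : ∀ j < i, (g j).IsHomogeneous d) {p : MvPolynomial (Fin n) k}
    (hp : p ∈ idealAdd ⊥ g i) (hph : p.IsHomogeneous (d + e)) :
    ∃ b : ℕ → MvPolynomial (Fin n) k, (∀ j, (b j).IsHomogeneous e) ∧
      p = ∑ j ∈ Finset.range i, g j * b j := by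
  obtain ⟨b, hb⟩ := exists_sum_of_mem_idealAdd p hp
  refine ⟨fun j => homogeneousComponent e (b j), fun j => homogeneousComponent_mem e (b j), ?_⟩
  have h1 := homogeneousComponent_of_mem (m := d + e) hph
  rw [if_pos rfl, hb, map_sum] at h1
  rw [hb, ← h1]
  refine Finset.sum_congr rfl fun j hj => ?_
  exact homogeneousComponent_mul_add (hg j (Finset.mem_range.1 hj)) _ _

lemma mem_idealAdd_of_lt {R : Type*} [CommRing R] (K : Ideal R) (g : ℕ → R) {i j : ℕ}
    (h : j < i) : g j ∈ idealAdd K g i := by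
  induction i with
  | zero => omega
  | succ i ih =>
    rcases (Nat.lt_succ_iff_lt_or_eq.1 h) with h | rfl
    · exact Ideal.mem_sup_left (ih h)
    · exact Ideal.mem_sup_right (Ideal.mem_span_singleton_self _)

end Hilbert

/-! ### From a kernel element to a syzygy -/

section Syzygy

variable {k : Type*} [Field k] {n : ℕ}

/-- A regular sequence in `m` is linearly independent: a member lying in the ideal of its
predecessors would force `1` into that ideal. -/
lemma finrank_span_regularSeq {g : ℕ → MvPolynomial (Fin n) k} {i : ℕ}
    (hg : ∀ j < i, g j ∈ mIdeal k n) (hr : RegularSeq ⊥ g i) :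
    Module.finrank k (Submodule.span k (Set.range fun j : Fin i => g j)) = i := by
  suffices LinearIndependent k fun j : Fin i => g j by
    rw [finrank_span_eq_card this, Fintype.card_fin]
  induction i with
  | zero => exact linearIndependent_empty_type
  | succ i ih =>
    rw [linearIndependent_finSucc']
    refine ⟨ih (fun j hj => hg j (by omega)) fun j hj => hr j (by omega), fun hmem => ?_⟩
    have h1 : g i ∈ idealAdd ⊥ g i := by
      have hle : Submodule.span k (Set.range (Fin.init fun j : Fin (i + 1) => g j)) ≤
          (idealAdd ⊥ g i).restrictScalars k := by
        rw [Submodule.span_le]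
        rintro _ ⟨j, rfl⟩
        exact mem_idealAdd_of_lt ⊥ g j.2
      simpa using hle hmem
    have h2 : (1 : MvPolynomial (Fin n) k) ∈ idealAdd ⊥ g i := hr i (by omega) 1 (by rwa [mul_one])
    have hle : ∀ j ≤ i, idealAdd ⊥ g j ≤ mIdeal k n := by
      intro j hj
      induction j with
      | zero => exact bot_le
      | succ j ihj =>
        exact sup_le (ihj (by omega))
          ((Ideal.span_singleton_le_iff_mem _).2 (hg j (by omega)))
    have h3 := hle i le_rfl h2
    rw [mIdeal, ← Set.image_univ, mem_ideal_span_X_image] at h3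
    obtain ⟨j, -, hj⟩ := h3 0 (by simp)
    exact hj rfl

/-- Lifting a kernel element to a non-Koszul syzygy. If `W = ⟨g 0, …, g (n - 1)⟩` is a hyperplane in
`⟨f 0, …, f n⟩` not containing `f t`, then the functional on `R ^ (n + 1)` reading off the
coefficient of `f t` modulo `W` sends Koszul syzygies into `J = (g 0, …, g (n - 1))`; a relation
`f t * b ∈ J` with `b ∉ J` therefore comes from a syzygy that is not Koszul. -/
lemma exists_syzygy {f : Fin (n + 1) → MvPolynomial (Fin n) k} {g : ℕ → MvPolynomial (Fin n) k}
    {d e : ℕ} (hfh : ∀ i, (f i).IsHomogeneous d) (hfl : LinearIndependent k f)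
    (hgV : ∀ j, g j ∈ Submodule.span k (Set.range f))
    (hfin : Module.finrank k (Submodule.span k (Set.range fun j : Fin n => g j)) = n)
    (hker : ∀ p : MvPolynomial (Fin n) k, p.IsHomogeneous d →
      ∃ b, b.IsHomogeneous e ∧ b ∉ idealAdd ⊥ g n ∧ p * b ∈ idealAdd ⊥ g n) :
    H1Nonzero f d (e + d) := by
  set V := Submodule.span k (Set.range f) with hV
  set W := Submodule.span k (Set.range fun j : Fin n => g j) with hW
  have hVfin : Module.finrank k V = n + 1 := by
    rw [hV, finrank_span_eq_card hfl, Fintype.card_fin]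
  have : FiniteDimensional k V := FiniteDimensional.span_of_finite k (Set.finite_range f)
  have hWV : W ≤ V := by
    rw [hW, Submodule.span_le]
    rintro _ ⟨j, rfl⟩
    exact hgV j
  have hWJ : ∀ w ∈ W, w ∈ idealAdd ⊥ g n := by
    have : W ≤ (idealAdd ⊥ g n).restrictScalars k := by
      rw [hW, Submodule.span_le]
      rintro _ ⟨j, rfl⟩
      exact mem_idealAdd_of_lt ⊥ g j.2
    exact this
  have hVh : V ≤ homogeneousSubmodule (Fin n) k d := by
    rw [hV, Submodule.span_le]
    rintro _ ⟨i, rfl⟩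
    exact hfh i
  obtain ⟨t, ht⟩ : ∃ t, f t ∉ W := by
    by_contra! hcon
    have hVW : V ≤ W := by
      rw [hV, Submodule.span_le]
      rintro _ ⟨i, rfl⟩
      exact hcon i
    have : FiniteDimensional k W := Submodule.finiteDimensional_of_le hWV
    have := Submodule.finrank_mono hVW
    omega
  have htV : f t ∈ V := Submodule.subset_span ⟨t, rfl⟩
  have hsup : W ⊔ Submodule.span k {f t} = V := by
    have hle : W ⊔ Submodule.span k {f t} ≤ V :=
      sup_le hWV ((Submodule.span_singleton_le_iff_mem _ _).2 htV)
    have : FiniteDimensional k (W ⊔ Submodule.span k {f t} : Submodule k _) :=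
      Submodule.finiteDimensional_of_le hle
    have hlt : W < W ⊔ Submodule.span k {f t} := by
      refine lt_of_le_of_ne le_sup_left fun heq => ht ?_
      rw [heq]
      exact Submodule.mem_sup_right (Submodule.mem_span_singleton_self _)
    have := Submodule.finrank_lt_finrank_of_lt hlt
    exact Submodule.eq_of_le_of_finrank_le hle (by omega)
  have hdec : ∀ i, ∃ w ∈ W, ∃ μ : k, f i = w + μ • f t := by
    intro i
    have hi : f i ∈ W ⊔ Submodule.span k {f t} := by
      rw [hsup]
      exact Submodule.subset_span ⟨i, rfl⟩
    obtain ⟨w, hw, y, hy, h⟩ := Submodule.mem_sup.1 hi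
    obtain ⟨μ, rfl⟩ := Submodule.mem_span_singleton.1 hy
    exact ⟨w, hw, μ, h.symm⟩
  choose w hw μ hμ using hdec
  have hμt : μ t ≠ 0 := by
    intro h0
    apply ht
    rw [hμ t, h0, zero_smul, add_zero]
    exact hw t
  have hc : ∀ j, ∃ c : Fin (n + 1) → k, ∑ i, c i • f i = g j := fun j =>
    (Submodule.mem_span_range_iff_exists_fun k).1 (hgV j)
  choose c hc using hc
  have hcμ : ∀ j < n, ∑ i, c j i * μ i = 0 := by
    intro j hj
    by_contra hne
    apply ht
    rw [← Submodule.smul_mem_iff W hne]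
    have h1 : (∑ i, c j i * μ i) • f t = g j - ∑ i, c j i • w i := by
      rw [← hc j, Finset.sum_smul, ← Finset.sum_sub_distrib]
      refine Finset.sum_congr rfl fun i _ => ?_
      conv_rhs => rw [hμ i]
      rw [smul_add, mul_smul]
      abel
    rw [h1]
    exact W.sub_mem (Submodule.subset_span ⟨⟨j, hj⟩, rfl⟩)
      (W.sum_mem fun i _ => W.smul_mem _ (hw i))
  obtain ⟨b, hbh, hbJ, hbt⟩ := hker (f t) (hfh t)
  obtain ⟨q, hqh, hq⟩ := exists_homogeneous_sum (fun j _ => hVh (hgV j)) hbt ((hfh t).mul hbh)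
  let a : Fin (n + 1) → MvPolynomial (Fin n) k :=
    fun i => Pi.single (M := fun _ => MvPolynomial (Fin n) k) t b i -
      ∑ j ∈ Finset.range n, c j i • q j
  refine ⟨a, e, rfl, fun i => ?_, ?_, fun haB => hbJ ?_⟩
  · have h1 : Pi.single (M := fun _ => MvPolynomial (Fin n) k) t b i ∈
        homogeneousSubmodule (Fin n) k e := by
      by_cases hit : i = t
      · subst hit; rw [Pi.single_eq_same]; exact hbh
      · rw [Pi.single_eq_of_ne hit]; exact Submodule.zero_mem _
    exact Submodule.sub_mem _ h1
      (Submodule.sum_mem _ fun j _ => Submodule.smul_mem _ _ (hqh j))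
  · simp only [a, sub_mul, Finset.sum_sub_distrib]
    have h1 : ∑ i, Pi.single (M := fun _ => MvPolynomial (Fin n) k) t b i * f i = f t * b := by
      rw [Finset.sum_eq_single t]
      · rw [Pi.single_eq_same, mul_comm]
      · intro i _ hit; rw [Pi.single_eq_of_ne hit, zero_mul]
      · simp
    rw [h1, hq, sub_eq_zero]
    simp only [Finset.sum_mul]
    rw [Finset.sum_comm]
    refine Finset.sum_congr rfl fun j _ => ?_
    rw [← hc j, Finset.sum_mul]
    refine Finset.sum_congr rfl fun i _ => ?_
    rw [smul_mul_assoc, smul_mul_assoc, mul_comm]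
  · let φ : (Fin (n + 1) → MvPolynomial (Fin n) k) →ₗ[MvPolynomial (Fin n) k]
        MvPolynomial (Fin n) k := ∑ i, μ i • LinearMap.proj i
    have hφ : ∀ x, φ x = ∑ i, μ i • x i := fun x => by
      simp [φ, LinearMap.sum_apply]
    have hφs : ∀ i p, φ (Pi.single i p) = μ i • p := by
      intro i p
      rw [hφ, Finset.sum_eq_single i]
      · rw [Pi.single_eq_same]
      · intro j _ hji; rw [Pi.single_eq_of_ne hji, smul_zero]
      · simp
    have hB : koszulB1 f ≤ Submodule.comap φ (idealAdd ⊥ g n) := by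
      rw [koszulB1, Submodule.span_le]
      rintro _ ⟨i, j, -, rfl⟩
      change φ _ ∈ idealAdd ⊥ g n
      apply hWJ
      have : φ (Pi.single j (f i) - Pi.single i (f j)) = μ j • w i - μ i • w j := by
        rw [map_sub, hφs, hφs]
        conv_lhs => rw [hμ i, hμ j]
        rw [smul_add, smul_add, smul_smul, smul_smul, mul_comm (μ i)]
        abel
      rw [this]
      exact W.sub_mem (W.smul_mem _ (hw i)) (W.smul_mem _ (hw j))
    have hφa : φ a = μ t • b := by
      have ha : a = Pi.single t b - fun i => ∑ j ∈ Finset.range n, c j i • q j := rfl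
      rw [ha, map_sub, hφs, hφ, sub_eq_self]
      simp only [Finset.smul_sum]
      rw [Finset.sum_comm]
      refine Finset.sum_eq_zero fun j hj => ?_
      have h1 := congrArg (· • q j) (hcμ j (Finset.mem_range.1 hj))
      simp only [Finset.sum_smul, zero_smul] at h1
      rw [← h1]
      refine Finset.sum_congr rfl fun i _ => ?_
      rw [smul_smul, mul_comm]
    have h1 : φ a ∈ idealAdd ⊥ g n := hB haB
    rw [hφa] at h1
    exact (Submodule.smul_mem_iff ((idealAdd ⊥ g n).restrictScalars k) hμt).1 h1

end Syzygy

/-- If `char k = 0` and `I` is `m`-primary, then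
`⌊(n-1)(d-1)/2⌋ ≤ μ₀(I) ≤ (n-1)(d-1)`, i.e. (since
`μ₀(I) = (n-1)(d-1) - indeg(H₁) + d` in the `m`-primary case)
`d ≤ indeg(H₁) ≤ d + ⌈(n-1)(d-1)/2⌉`. -/
theorem threshold_bounds_m_primary
    (k : Type*) [Field k] [CharZero k] (n d : ℕ) (hn : 2 ≤ n) (hd : 1 ≤ d)
    (f : Fin (n+1) → MvPolynomial (Fin n) k)
    (hfh : ∀ i, (f i).IsHomogeneous d)
    (hfl : LinearIndependent k f)
    (I : Ideal (MvPolynomial (Fin n) k)) (hI : I = Ideal.span (Set.range f))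
    (hprim : ∃ N : ℕ, (mIdeal k n) ^ N ≤ I) :
    (d : ℕ∞) ≤ indegE {ν | H1Nonzero f d ν} ∧
      indegE {ν | H1Nonzero f d ν} ≤ ((d + ((n - 1) * (d - 1) + 1) / 2 : ℕ) : ℕ∞) := by
  subst hI
  have hdrop := boxCoeff_drop n d hn hd
  set e := ((n - 1) * (d - 1) + 1) / 2 with he
  constructor
  · refine le_sInf ?_
    rintro _ ⟨_, ⟨_, e', rfl, _⟩, rfl⟩
    exact_mod_cast Nat.le_add_left d e'
  · refine sInf_le ⟨d + e, ?_, rfl⟩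
    obtain ⟨N, hN⟩ := hprim
    set V := Submodule.span k (Set.range f) with hV
    have hVN : mIdeal k n ^ N ≤ Ideal.span (V : Set (MvPolynomial (Fin n) k)) :=
      hN.trans (Ideal.span_mono Submodule.subset_span)
    have hVh : ∀ v ∈ V, v.IsHomogeneous d := by
      have : V ≤ homogeneousSubmodule (Fin n) k d := by
        rw [hV, Submodule.span_le]
        rintro _ ⟨i, rfl⟩
        exact hfh i
      exact this
    have hVm : ∀ v ∈ V, v ∈ mIdeal k n := fun v hv =>
      mem_mIdeal_of_isHomogeneous (by omega) (hVh v hv)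
    obtain ⟨g, hgV, hgr⟩ := exists_regularSeq V hVN hVm ⊥ (varSeq k n) n
      (fun j hj => by
        rw [varSeq_of_lt hj]
        exact Ideal.subset_span ⟨_, rfl⟩)
      regularSeq_varSeq
    have hgh : ∀ j < n, (g j).IsHomogeneous d := fun j _ => hVh _ (hgV j)
    change H1Nonzero f d (d + e)
    rw [add_comm]
    refine exists_syzygy hfh hfl hgV
      (finrank_span_regularSeq (fun j _ => hVm _ (hgV j)) hgr) fun p hp => exists_kernel hp ?_
    rw [hilb_completeIntersection hgh hgr]
    exact hdrop

end
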